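/- Let A be a commutative Noetherian local ring with maximal ideal m and residue field k, and M a nonzero finitely generated A-module. Then depth M (the maximal length of an M-regular sequence contained in m) equals the least integer n such that Ext^n_A(k, M) ≠ 0. -/

import Mathlib

open CategoryTheory

/-- The `n`-th Ext group of `M` and `N` over `R`. -/
noncomputable def extModule (R : Type) [CommRing R] (M N : ModuleCat R) (n : ℕ) :
    ModuleCat R :=
  ((Ext R (ModuleCat R) n).obj (Opposite.op M)).obj N

/-- The depth of a module over a local ring: the supremum of lengths of
`M`-regular sequences contained in the maximal ideal. -/
noncomputable def depth (R : Type) [CommRing R] [IsLocalRing R]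
    (M : Type) [AddCommGroup M] [Module R M] : ℕ∞ :=
  sSup {n : ℕ∞ | ∃ rs : List R, (rs.length : ℕ∞) = n ∧
    (∀ x ∈ rs, x ∈ IsLocalRing.maximalIdeal R) ∧ RingTheory.Sequence.IsRegular M rs}

theorem exact_linearYonedaObj_iff (R : Type) [CommRing R] (X Y : ModuleCat R)
    (P : ProjectiveResolution X) (i n : ℕ) (hi : (ComplexShape.up ℕ).prev n = i) :
    Subsingleton (extModule R X Y n) ↔
      ∀ f : P.complex.X n ⟶ Y, P.complex.d (n + 1) n ≫ f = 0 →
        ∃ g : P.complex.X i ⟶ Y, P.complex.d n i ≫ g = f := by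
  rw [extModule, ← ModuleCat.isZero_iff_subsingleton, (P.isoExt (R := R) n Y).isZero_iff,
    ← HomologicalComplex.exactAt_iff_isZero_homology,
    HomologicalComplex.exactAt_iff' _ i n (n + 1) hi (by simp),
    ShortComplex.moduleCat_exact_iff]
  rfl

theorem subsingleton_extModule_iff (R : Type) [CommRing R] (X Y : ModuleCat R) (n : ℕ) :
    Subsingleton (extModule R X Y n) ↔ Subsingleton (Abelian.Ext.{0} X Y n) := by
  let P := ProjectiveResolution.of X
  cases n with
  | zero =>
    rw [exact_linearYonedaObj_iff R X Y P 0 0 (by simp),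
      Abelian.Ext.addEquiv₀.subsingleton_congr]
    constructor
    · intro h
      refine subsingleton_of_forall_eq 0 fun f => ?_
      let fz : ((ChainComplex.single₀ (ModuleCat R)).obj X).X 0 ⟶ Y := f
      obtain ⟨g, hg⟩ := h (P.π.f 0 ≫ fz) (by
        rw [← Category.assoc]
        exact (congrArg (· ≫ fz) P.complex_d_comp_π_f_zero).trans Limits.zero_comp)
      rw [P.complex.shape 0 0 (by simp), Limits.zero_comp] at hg
      have h0 : fz = 0 := by
        rw [← cancel_epi (P.π.f 0), ← hg, Limits.comp_zero]
      exact h0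
    · intro h f hf
      refine ⟨0, ?_⟩
      obtain ⟨l, hl⟩ := Limits.CokernelCofork.IsColimit.desc' P.isColimitCokernelCofork f hf
      rw [Limits.comp_zero, ← hl]
      have : l = 0 := h.elim (α := X ⟶ Y) l 0
      rw [this, Limits.comp_zero]
  | succ n =>
    rw [exact_linearYonedaObj_iff R X Y P n (n + 1) (by simp)]
    constructor
    · intro h
      refine subsingleton_of_forall_eq 0 fun a => ?_
      obtain ⟨f, hf, rfl⟩ := P.extMk_surjective a (n + 1 + 1) rfl
      exact (P.extMk_eq_zero_iff f _ rfl hf n rfl).2 (h f hf)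
    · intro h f hf
      exact (P.extMk_eq_zero_iff f _ rfl hf n rfl).1 (Subsingleton.elim _ _)

/-- Rees' characterization of depth: for a nonzero finitely generated module `M`
over a commutative Noetherian local ring with residue field `k`,
`depth M = inf { n | Ext^n(k, M) ≠ 0 }`. -/
theorem stmt5 (R : Type) [CommRing R] [IsNoetherianRing R] [IsLocalRing R]
    (M : Type) [AddCommGroup M] [Module R M] [Module.Finite R M] [Nontrivial M] :
    depth R M =
      (sInf {n : ℕ | Nontrivial (extModule R
        (ModuleCat.of R (IsLocalRing.ResidueField R)) (ModuleCat.of R M) n)} : ℕ) := by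
  classical
  have hsmul : IsLocalRing.maximalIdeal R • (⊤ : Submodule R M) < ⊤ := by
    refine lt_top_iff_ne_top.2 fun h => ?_
    exact Submodule.top_ne_ideal_smul_of_le_jacobson_annihilator
      (IsLocalRing.maximalIdeal_le_jacobson _) h.symm
  have hsupp : Module.support R (ModuleCat.of R (IsLocalRing.ResidueField R)) =
      PrimeSpectrum.zeroLocus (IsLocalRing.maximalIdeal R) := by
    change Module.support R (R ⧸ IsLocalRing.maximalIdeal R) = _
    rw [Module.support_eq_zeroLocus, Ideal.annihilator_quotient]
  have : Module.Finite R (ModuleCat.of R (IsLocalRing.ResidueField R)) :=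
    inferInstanceAs (Module.Finite R (R ⧸ IsLocalRing.maximalIdeal R))
  have : Module.Finite R (ModuleCat.of R M) := inferInstanceAs (Module.Finite R M)
  set S := {n : ℕ | Nontrivial (extModule R
        (ModuleCat.of R (IsLocalRing.ResidueField R)) (ModuleCat.of R M) n)} with hS
  have hnot : ∀ n, n ∉ S ↔ Subsingleton (Abelian.Ext.{0}
      (ModuleCat.of R (IsLocalRing.ResidueField R)) (ModuleCat.of R M) n) := fun n => by
    rw [← subsingleton_extModule_iff, hS, Set.mem_ofPred_eq, not_nontrivial_iff_subsingleton]
  have hex : ∀ n, (∀ i < n, i ∉ S) → ∃ rs : List R, rs.length = n ∧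
      (∀ r ∈ rs, r ∈ IsLocalRing.maximalIdeal R) ∧ RingTheory.Sequence.IsRegular M rs :=
    fun n h => ModuleCat.exists_isRegular_of_exists_subsingleton_ext
      (IsLocalRing.maximalIdeal R) n (ModuleCat.of R M) hsmul _ hsupp
      fun i hi => (hnot i).1 (h i hi)
  have hne : S.Nonempty := by
    by_contra hemp
    rw [Set.not_nonempty_iff_eq_empty] at hemp
    have hlen : ∀ n : ℕ, (n : WithBot ℕ∞) ≤ ringKrullDim R := fun n => by
      obtain ⟨rs, rfl, -, hreg⟩ := hex n (by simp [hemp])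
      refine le_trans ?_ (Module.supportDim_le_ringKrullDim R M)
      rw [← Module.supportDim_add_length_eq_supportDim_of_isRegular rs hreg]
      have h0 : 0 ≤ Module.supportDim R (M ⧸ Ideal.ofList rs • (⊤ : Submodule R M)) := by
        have : Nontrivial (M ⧸ Ideal.ofList rs • (⊤ : Submodule R M)) :=
          Submodule.Quotient.nontrivial_iff.2 hreg.top_ne_smul.symm
        rw [Module.supportDim, Order.krullDim_nonneg_iff]
        exact (Module.nonempty_support_of_nontrivial).to_subtype
      exact le_add_of_nonneg_left h0
    obtain ⟨d, hd⟩ := WithBot.ne_bot_iff_exists.1 (ringKrullDim_ne_bot (R := R))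
    have hdt : d ≠ ⊤ := by
      rintro rfl
      exact ringKrullDim_ne_top (R := R) hd.symm
    obtain ⟨n, rfl⟩ := ENat.ne_top_iff_exists.1 hdt
    have := hlen (n + 1)
    rw [← hd] at this
    have : n + 1 ≤ n := by exact_mod_cast this
    omega
  apply le_antisymm
  · refine sSup_le ?_
    rintro _ ⟨rs, rfl, hmem, hreg⟩
    rw [Nat.cast_le]
    by_contra! hlt
    exact (hnot _).2 (ModuleCat.subsingleton_ext_of_exists_isRegular
      (IsLocalRing.maximalIdeal R) _ hsupp.subset (ModuleCat.of R M) hsmul rs hmem hreg _ hlt)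
      (Nat.sInf_mem hne)
  · obtain ⟨rs, h1, h2, h3⟩ := hex (sInf S) fun i hi => Nat.notMem_of_lt_sInf hi
    exact le_sSup ⟨rs, by rw [h1], h2, h3⟩
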